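/- For a purely periodic run of the p-adic Jacobi–Perron algorithm with period N, every root z ∈ K of the characteristic polynomial P(X) with z ≠ μ satisfies ‖z‖ < 1, whereas the root μ = α_0^{(1)} α_1^{(1)} ⋯ α_{N-1}^{(1)} satisfies |μ|_p > 1. -/

import Mathlib

open Finset Filter

/-- `q` belongs to `ℤ[1/p]`. -/
def InZInvP (p : ℕ) (q : ℚ) : Prop := ∃ (z : ℤ) (k : ℕ), q = (z : ℚ) / (p : ℚ) ^ k

/-- `a` is the Browkin `s`-function value of `x`:
`a ∈ ℤ[1/p]`, `|a|_∞ < p/2` and `|x - a|_p < 1`. -/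
def IsSValue (p : ℕ) [Fact p.Prime] (x : ℚ_[p]) (a : ℚ) : Prop :=
  InZInvP p a ∧ |a| < (p : ℚ) / 2 ∧ ‖x - (a : ℚ_[p])‖ < 1

/-- An infinite run of the `p`-adic Jacobi–Perron algorithm with complete quotients
`α n i` and partial quotients `a n i` (`n ≥ 0`, `i = 1,…,m`). -/
def JPRun (p : ℕ) [Fact p.Prime] (m : ℕ) (α : ℕ → ℕ → ℚ_[p]) (a : ℕ → ℕ → ℚ) : Prop :=
  ∀ n : ℕ,
    (∀ i ∈ Finset.Icc 1 m, IsSValue p (α n i) (a n i)) ∧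
    α n m ≠ ((a n m : ℚ) : ℚ_[p]) ∧
    α (n + 1) 1 = (α n m - ((a n m : ℚ) : ℚ_[p]))⁻¹ ∧
    ∀ i ∈ Finset.Icc 2 m,
      α (n + 1) i = (α n (i - 1) - ((a n (i - 1) : ℚ) : ℚ_[p])) / (α n m - ((a n m : ℚ) : ℚ_[p]))

/-- `A : ℤ → ℕ → ℚ` is the family of convergent numerators/denominators attached to the
partial quotients `a`: `A (-j) i = δ_{ij}` for `j = 1,…,m+1`, and for `n ≥ 0`,
`A n i = Σ_{j=1}^m a n j * A (n-j) i + A (n-m-1) i`. -/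
def JPConv (m : ℕ) (a : ℕ → ℕ → ℚ) (A : ℤ → ℕ → ℚ) : Prop :=
  (∀ i ∈ Finset.Icc 1 (m + 1), ∀ j ∈ Finset.Icc 1 (m + 1),
      A (-(j : ℤ)) i = if i = j then 1 else 0) ∧
  (∀ n : ℕ, ∀ i ∈ Finset.Icc 1 (m + 1),
      A n i = (∑ j ∈ Finset.Icc 1 m, a n j * A ((n : ℤ) - j) i) + A ((n : ℤ) - m - 1) i)

/-- The abstract core: a recurrence sequence orthogonal to the complete quotients contracts. -/
theorem jp_core {K : Type} [NormedField K] [IsUltrametricDist K] (k N : ℕ) (hN : 1 ≤ N)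
    (α a : ℕ → ℕ → K) (x : ℤ → K) (z : K)
    (hrec : ∀ n : ℕ, x n = (∑ j ∈ range (k+1), a n (j+1) * x ((n:ℤ) - ((j:ℤ)+1)))
      + x ((n:ℤ) - ((k:ℤ)+2)))
    (hlt : ∀ n j, j < k+1 → ‖α n (j+1) - a n (j+1)‖ < 1)
    (h1 : ∀ n, α (n+1) 1 * (α n (k+1) - a n (k+1)) = 1)
    (h2 : ∀ n j, j < k → α (n+1) (j+2) * (α n (k+1) - a n (k+1)) = α n (j+1) - a n (j+1))
    (hperα : ∀ n j, j < k+1 → α (n+N) (j+1) = α n (j+1))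
    (hpera : ∀ n j, j < k+1 → a (n+N) (j+1) = a n (j+1))
    (hz : ∀ j : ℕ, j < k+2 → x ((N:ℤ) - ((j:ℤ)+1)) = z * x (-((j:ℤ)+1)))
    (hne : ∃ j : ℕ, j < k+2 ∧ x (-((j:ℤ)+1)) ≠ 0)
    (hzμ : z ≠ ∏ j ∈ range N, α j 1) : ‖z‖ < 1 := by
  -- periodicity of `x` up to the factor `z`
  have hx : ∀ n : ℕ, x ((n:ℤ) - ((k:ℤ)+2) + N) = z * x ((n:ℤ) - ((k:ℤ)+2)) := by
    intro n
    induction n using Nat.strong_induction_on with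
    | _ n ih =>
      by_cases hn : n < k+2
      · have := hz (k+1-n) (by omega)
        rw [Nat.cast_sub (by omega)] at this
        push_cast at this
        convert this using 2 <;> [skip; congr 1] <;> ring
      · obtain ⟨r, rfl⟩ := Nat.exists_eq_add_of_le (not_lt.mp hn)
        have e1 : (((k+2+r : ℕ):ℤ) - ((k:ℤ)+2) + N) = ((r+N : ℕ) : ℤ) := by push_cast; ring
        have e2 : (((k+2+r : ℕ):ℤ) - ((k:ℤ)+2)) = ((r : ℕ) : ℤ) := by push_cast; ring
        rw [e1, e2, hrec, hrec, mul_add, mul_sum]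
        congr 1
        · apply sum_congr rfl
          intro j hj
          rw [mem_range] at hj
          have := ih (k+2+r-(j+1)) (by omega)
          rw [Nat.cast_sub (by omega)] at this
          have e3 : (((r+N : ℕ) : ℤ) - ((j:ℤ)+1)) = ((k+2+r:ℕ):ℤ) - ((j+1:ℕ):ℤ) - ((k:ℤ)+2) + N := by
            push_cast; ring
          have e4 : (((r : ℕ) : ℤ) - ((j:ℤ)+1)) = ((k+2+r:ℕ):ℤ) - ((j+1:ℕ):ℤ) - ((k:ℤ)+2) := by
            push_cast; ring
          rw [hpera _ _ hj, e3, e4, this]; ring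
        · have := ih r (by omega)
          rw [← this]; congr 1; push_cast; ring
  -- the linear form
  let L : ℕ → K := fun n => (∑ j ∈ range (k+1), α n (j+1) * x ((n:ℤ) - ((j:ℤ)+1)))
      + x ((n:ℤ) - ((k:ℤ)+2))
  have hd : ∀ n, α n (k+1) - a n (k+1) ≠ 0 := fun n h => by
    have := h1 n
    rw [h, mul_zero] at this
    exact zero_ne_one this
  have hL' : ∀ n, L n = x n + ∑ j ∈ range (k+1), (α n (j+1) - a n (j+1)) * x ((n:ℤ) - ((j:ℤ)+1)) := by
    intro n
    rw [hrec]
    simp only [L, sub_mul, sum_sub_distrib]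
    ring
  have hLs : ∀ n, (α n (k+1) - a n (k+1)) * L (n+1) = L n := by
    intro n
    rw [hL' n, sum_range_succ]
    simp only [L]
    rw [sum_range_succ', mul_add, mul_add, mul_sum]
    have t1 : ∑ j ∈ range k, (α n (k+1) - a n (k+1)) *
        (α (n+1) (j+1+1) * x (((n+1:ℕ):ℤ) - (((j+1:ℕ):ℤ)+1)))
        = ∑ j ∈ range k, (α n (j+1) - a n (j+1)) * x ((n:ℤ) - ((j:ℤ)+1)) := by
      apply sum_congr rfl
      intro j hj
      rw [← h2 n j (mem_range.mp hj)]
      have : (((n+1:ℕ):ℤ) - (((j+1:ℕ):ℤ)+1)) = (n:ℤ) - ((j:ℤ)+1) := by push_cast; ring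
      rw [this]; ring
    have e1 : (((n+1:ℕ):ℤ) - (((0:ℕ):ℤ)+1)) = n := by push_cast; ring
    have e2 : (((n+1:ℕ):ℤ) - ((k:ℤ)+2)) = (n:ℤ) - ((k:ℤ)+1) := by push_cast; ring
    rw [t1, e1, e2]
    linear_combination (x n) * h1 n
  have hLN : L N = z * L 0 := by
    simp only [L]
    rw [mul_add, mul_sum]
    congr 1
    · apply sum_congr rfl
      intro j hj
      have hj := mem_range.mp hj
      have := hperα 0 j hj
      rw [zero_add] at this
      rw [this, hz j (by omega)]
      simp; ring
    · have := hz (k+1) (by omega)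
      push_cast at this ⊢
      convert this using 2 <;> [skip; congr 1] <;> ring
  have hprod : ∀ n, L n = (∏ j ∈ range n, α (j+1) 1) * L 0 := by
    intro n
    induction n with
    | zero => simp
    | succ n ih =>
      rw [prod_range_succ]
      linear_combination α (n+1) 1 * ih - L (n+1) * h1 n + α (n+1) 1 * hLs n
  have hμ : ∏ j ∈ range N, α (j+1) 1 = ∏ j ∈ range N, α j 1 := by
    have h := prod_range_succ (fun j => α j 1) N
    rw [prod_range_succ'] at h
    have h0 := hperα 0 0 (by omega)
    rw [zero_add] at h0
    simp only [zero_add] at h0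
    rw [h0] at h
    have : α 0 1 ≠ 0 := by
      rw [← h0]
      obtain ⟨r, rfl⟩ := Nat.exists_eq_add_of_le' hN
      exact left_ne_zero_of_mul_eq_one (h1 r)
    exact mul_right_cancel₀ this h
  have hL0 : L 0 = 0 := by
    have h := hprod N
    rw [hLN, hμ] at h
    by_contra h0
    exact hzμ (mul_right_cancel₀ h0 h)
  have hL : ∀ n, L n = 0 := fun n => by rw [hprod, hL0, mul_zero]
  have hxc : ∀ n : ℕ, x n = -∑ j ∈ range (k+1), (α n (j+1) - a n (j+1)) * x ((n:ℤ) - ((j:ℤ)+1)) := by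
    intro n
    have := hL' n
    rw [hL] at this
    exact eq_neg_of_add_eq_zero_left this.symm
  -- maximum over the initial window
  obtain ⟨j0, hj0, hmax⟩ := exists_max_image (range (k+1)) (fun j : ℕ => ‖x (-((j:ℤ)+1))‖) ⟨0, by simp⟩
  have hj0 := mem_range.mp hj0
  have hS : 0 < ‖x (-((j0:ℤ)+1))‖ := by
    by_contra hneg
    have hall : ∀ j : ℕ, j < k+1 → x (-((j:ℤ)+1)) = 0 := by
      intro j hj
      exact norm_le_zero_iff.mp ((hmax j (mem_range.mpr hj)).trans (not_lt.mp hneg))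
    obtain ⟨j, hj, hjne⟩ := hne
    by_cases hjk : j < k+1
    · exact hjne (hall j hjk)
    · have : j = k+1 := by omega
      subst this
      apply hjne
      have h := hL0
      simp only [L] at h
      rw [sum_eq_zero (by
        intro i hi
        have := hall i (mem_range.mp hi)
        simp only [Nat.cast_zero, zero_sub]
        rw [this, mul_zero]), zero_add] at h
      rw [← h]; congr 1
  by_contra hz1
  have hz1 : 1 ≤ ‖z‖ := not_lt.mp hz1
  have hsmall : ∀ n : ℕ, ‖x n‖ < ‖x (-((j0:ℤ)+1))‖ := by
    intro n
    induction n using Nat.strong_induction_on with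
    | _ n ih =>
      rw [hxc, norm_neg]
      obtain ⟨i, hi, hle⟩ := IsUltrametricDist.exists_norm_finsetSum_le_of_nonempty
        (t := range (k+1)) ⟨0, by simp⟩
        (fun j => (α n (j+1) - a n (j+1)) * x ((n:ℤ) - ((j:ℤ)+1)))
      refine hle.trans_lt ?_
      have hi := mem_range.mp hi
      have hxi : ‖x ((n:ℤ) - ((i:ℤ)+1))‖ ≤ ‖x (-((j0:ℤ)+1))‖ := by
        by_cases hni : i + 1 ≤ n
        · have := ih (n-(i+1)) (by omega)
          rw [Nat.cast_sub hni] at this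
          push_cast at this
          exact this.le
        · have := hmax (i-n) (mem_range.mpr (by omega))
          rw [Nat.cast_sub (by omega)] at this
          have e : (n:ℤ) - ((i:ℤ)+1) = -(((i:ℤ) - n) + 1) := by ring
          rw [e]
          exact this
      rw [norm_mul]
      calc _ ≤ ‖α n (i+1) - a n (i+1)‖ * ‖x (-((j0:ℤ)+1))‖ :=
            mul_le_mul_of_nonneg_left hxi (norm_nonneg _)
        _ < 1 * ‖x (-((j0:ℤ)+1))‖ := mul_lt_mul_of_pos_right (hlt n i hi) hS
        _ = _ := one_mul _
  have hgrow : ∀ t : ℕ, ‖x (-((j0:ℤ)+1))‖ ≤ ‖x (-((j0:ℤ)+1) + t * N)‖ := by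
    intro t
    induction t with
    | zero => simp
    | succ t ih =>
      have h := hx (k+1-j0 + t*N)
      have e : (((k+1-j0 + t*N : ℕ) : ℤ) - ((k:ℤ)+2)) = -((j0:ℤ)+1) + t * N := by
        push_cast [Nat.cast_sub (show j0 ≤ k+1 by omega)]; ring
      rw [e] at h
      have e2 : -((j0:ℤ)+1) + ((t+1:ℕ):ℤ) * N = -((j0:ℤ)+1) + t * N + N := by push_cast; ring
      rw [e2, h, norm_mul]
      nlinarith [norm_nonneg (x (-((j0:ℤ)+1) + t * N))]
  have hA := hgrow (j0+1)
  have hle : j0+1 ≤ (j0+1)*N := Nat.le_mul_of_pos_right _ hN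
  have hB := hsmall ((j0+1)*N - (j0+1))
  rw [Nat.cast_sub hle] at hB
  have e : -((j0:ℤ)+1) + ((j0+1:ℕ):ℤ) * N = (((j0+1)*N:ℕ):ℤ) - ((j0+1:ℕ):ℤ) := by
    push_cast; ring
  rw [e] at hA
  exact absurd hB (not_lt.mpr hA)

/-- For a purely periodic run with period `N`, every root `z ≠ μ` of the
characteristic polynomial `P(X)` in an algebraic closure `K` of `ℚ_p` satisfies `‖z‖ < 1`,
while the dominant root `μ = α₀⁽¹⁾α₁⁽¹⁾⋯α_{N-1}⁽¹⁾` satisfies `|μ|_p > 1`. -/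
theorem jacobiPerron_periodic_roots_norms (p m N : ℕ) [hp : Fact p.Prime]
    (hp2 : 2 < p) (hm : 1 ≤ m) (hN : 1 ≤ N)
    (α : ℕ → ℕ → ℚ_[p]) (a : ℕ → ℕ → ℚ) (A : ℤ → ℕ → ℚ)
    (hrun : JPRun p m α a) (hconv : JPConv m a A)
    (hper : ∀ n : ℕ, ∀ i ∈ Finset.Icc 1 m, α (n + N) i = α n i ∧ a (n + N) i = a n i)
    (M : Matrix (Fin (m + 1)) (Fin (m + 1)) ℚ)
    (hM : ∀ i j : Fin (m + 1), M i j = A ((N : ℤ) - ((j : ℕ) + 1)) ((i : ℕ) + 1))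
    (μ : ℚ_[p]) (hμ : μ = ∏ j ∈ Finset.range N, α j 1)
    (K : Type) [NormedField K] [Algebra ℚ_[p] K] [IsAlgClosure ℚ_[p] K]
    (hext : ∀ x : ℚ_[p], ‖algebraMap ℚ_[p] K x‖ = ‖x‖) :
    (∀ z : K, Polynomial.aeval z ((Matrix.charpoly M).map (algebraMap ℚ ℚ_[p])) = 0 →
      z ≠ algebraMap ℚ_[p] K μ → ‖z‖ < 1) ∧ 1 < ‖μ‖ := by
  obtain ⟨k, rfl⟩ := Nat.exists_eq_add_of_le' hm
  have h1 : ∀ n, α (n+1) 1 * (α n (k+1) - ((a n (k+1) : ℚ) : ℚ_[p])) = 1 := by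
    intro n
    obtain ⟨-, hd, h, -⟩ := hrun n
    rw [h, inv_mul_cancel₀ (sub_ne_zero.mpr hd)]
  have h2 : ∀ n j, j < k → α (n+1) (j+2) * (α n (k+1) - ((a n (k+1) : ℚ) : ℚ_[p]))
      = α n (j+1) - ((a n (j+1) : ℚ) : ℚ_[p]) := by
    intro n j hj
    obtain ⟨-, hd, -, h⟩ := hrun n
    rw [h (j+2) (mem_Icc.mpr ⟨by omega, by omega⟩), div_mul_cancel₀ _ (sub_ne_zero.mpr hd)]
    rfl
  have hlt : ∀ n j, j < k+1 → ‖α n (j+1) - ((a n (j+1) : ℚ) : ℚ_[p])‖ < 1 := by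
    intro n j hj
    exact ((hrun n).1 (j+1) (mem_Icc.mpr ⟨by omega, by omega⟩)).2.2
  have hbig : ∀ n, 1 < ‖α n 1‖ := by
    have hs : ∀ n, 1 < ‖α (n+1) 1‖ := by
      intro n
      have h := congrArg norm (h1 n)
      rw [norm_mul, norm_one] at h
      have h3 := hlt n k (by omega)
      by_contra hc
      nlinarith [norm_nonneg (α n (k+1) - ((a n (k+1) : ℚ) : ℚ_[p])), norm_nonneg (α (n+1) 1)]
    intro n
    rw [← (hper n 1 (by simp)).1]
    obtain ⟨r, rfl⟩ := Nat.exists_eq_add_of_le' hN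
    exact hs (n + r)
  refine ⟨?_, ?_⟩
  swap
  · rw [hμ, norm_prod]
    have hgen : ∀ n, 1 < ∏ j ∈ range (n+1), ‖α j 1‖ := by
      intro n
      induction n with
      | zero => simpa using hbig 0
      | succ n ih =>
        rw [prod_range_succ]
        exact one_lt_mul_of_lt_of_le ih (hbig _).le
    obtain ⟨r, rfl⟩ := Nat.exists_eq_add_of_le' hN
    exact hgen r
  intro z hroot hzμ
  let ι := algebraMap ℚ_[p] K
  let φ : ℚ →+* K := ι.comp (algebraMap ℚ ℚ_[p])
  have : IsUltrametricDist K := by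
    apply IsUltrametricDist.isUltrametricDist_of_forall_norm_natCast_le_one
    intro n
    have := hext (n : ℚ_[p])
    rw [map_natCast] at this
    rw [this]
    exact_mod_cast Padic.norm_int_le_one (p := p) (n : ℤ)
  have hdet : (Matrix.scalar (Fin (k+1+1)) z - M.map φ).det = 0 := by
    rw [← Matrix.eval_charpoly]
    rw [Matrix.charpoly_map, Polynomial.eval_map]
    rw [Polynomial.aeval_def, Polynomial.eval₂_map] at hroot
    exact hroot
  obtain ⟨w, hw0, hw⟩ := Matrix.exists_vecMul_eq_zero_iff.mpr hdet
  rw [Matrix.vecMul_sub, sub_eq_zero] at hw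
  have hw' : ∀ j, ∑ i, w i * φ (M i j) = z * w j := by
    intro j
    have := congrFun hw j
    simp [Matrix.scalar_apply, Matrix.vecMul_diagonal] at this
    simp only [Matrix.vecMul, dotProduct, Matrix.map_apply] at this
    rw [← this, mul_comm]
  let x : ℤ → K := fun n => ∑ i : Fin (k+1+1), w i * φ (A n ((i:ℕ)+1))
  have hx0 : ∀ j : Fin (k+1+1), x (-(((j:ℕ):ℤ)+1)) = w j := by
    intro j
    have : ∀ i : Fin (k+1+1), A (-(((j:ℕ):ℤ)+1)) ((i:ℕ)+1) = if i = j then 1 else 0 := by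
      intro i
      have := hconv.1 ((i:ℕ)+1) (mem_Icc.mpr ⟨by omega, by omega⟩) ((j:ℕ)+1)
        (mem_Icc.mpr ⟨by omega, by omega⟩)
      push_cast at this
      rw [this]
      simp [Fin.ext_iff]
    simp only [x, this]
    simp
  have hsum : ∀ f : ℕ → K, ∑ j ∈ Icc 1 (k+1), f j = ∑ j ∈ range (k+1), f (j+1) := by
    intro f
    rw [range_eq_Ico, sum_Ico_add' f 0 (k+1) 1]
    rfl
  refine jp_core k N hN (fun n j => ι (α n j)) (fun n j => φ (a n j)) x z ?_ ?_ ?_ ?_ ?_ ?_ ?_ ?_ ?_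
  · intro n
    have hA : ∀ i : Fin (k+1+1), φ (A n ((i:ℕ)+1)) = (∑ j ∈ range (k+1), φ (a n (j+1)) *
        φ (A ((n:ℤ) - ((j:ℤ)+1)) ((i:ℕ)+1))) + φ (A ((n:ℤ) - ((k:ℤ)+2)) ((i:ℕ)+1)) := by
      intro i
      rw [hconv.2 n ((i:ℕ)+1) (mem_Icc.mpr ⟨by omega, by omega⟩), map_add, map_sum, hsum]
      congr 1
      · apply sum_congr rfl
        intro j _
        rw [map_mul]
        push_cast; rfl
      · congr 2
        push_cast; ring
    simp only [x, hA, mul_add, sum_add_distrib, mul_sum]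
    congr 1
    rw [sum_comm]
    apply sum_congr rfl
    intro j _
    apply sum_congr rfl
    intro i _
    ring
  · intro n j hj
    have := hlt n j hj
    rw [← hext, map_sub] at this
    exact this
  · intro n
    have := congrArg ι (h1 n)
    rw [map_mul, map_sub, map_one] at this
    exact this
  · intro n j hj
    have := congrArg ι (h2 n j hj)
    rw [map_mul, map_sub, map_sub] at this
    exact this
  · intro n j hj
    exact congrArg ι (hper n (j+1) (mem_Icc.mpr ⟨by omega, by omega⟩)).1
  · intro n j hj
    exact congrArg φ (hper n (j+1) (mem_Icc.mpr ⟨by omega, by omega⟩)).2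
  · intro j hj
    have h := hw' ⟨j, hj⟩
    rw [← hx0 ⟨j, hj⟩] at h
    simp only [hM] at h
    exact h
  · obtain ⟨j, hj⟩ := Function.ne_iff.mp hw0
    refine ⟨j, j.2, ?_⟩
    rw [hx0]
    exact hj
  · intro h
    apply hzμ
    rw [h, hμ, map_prod]
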